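/- Let S be a semitopological semigroup and X a norm-closed linear subspace of ℓ∞(S) containing the constant functions and invariant under all left and right translations. Suppose that S acts on a nonempty weakly compact convex subset K of a Banach space E so that the action is weakly separately continuous and nonexpansive, and for every y ∈ K and every weakly continuous complex-valued function f on K, the function s ↦ f(s·y) belongs to X. If X has a left invariant mean, then there is a common fixed point of S in K. -/

import Mathlib

/-!
The mean turns each orbit into an invariant Radon probability measure on `K` with its weak topology
(a positive functional on `C(K)`, see `orbitFunctional`), and each `s` maps the support of such a
measure onto itself. By Zorn's lemma, choose a minimal weakly closed convex invariant set `Q` and,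
inside it, a minimal weakly closed invariant set `F`; the measure of an orbit in `F` has support `F`.

The essential point is that `F` is totally bounded in norm (`exists_net`). Weakly compact sets are
fragmented by the norm (`exists_small_open`), so `F` has a relatively weakly open piece `U` of norm
diameter at most `ε` and, being the support, this piece has positive measure `c`. For `u ∈ U`,
nonexpansiveness puts `s • U` inside the ball of radius `ε` about `s • u`, and by invariance that
ball has measure at least `c`. Hence at most `1 / c` orbit points of `u` are pairwise more than `2ε`
apart (`IsProbFunctional.card_mul_le`), and the orbit is weakly dense in `F`.

DeMarr's argument then finishes (`core_fixed_point`). If `F` has diameter `d > 0`, the average of a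
finite `d / 2`-net of `F` lies within some `r < d` of every point of `F` (`exists_nondiametral`).
The points of `Q` within `r` of all of `F` form a nonempty closed convex set, invariant because
`s • F = F`, so by minimality they are all of `Q ⊇ F`, which contradicts `r < d`. So `F` is a single
point, and it is fixed.
-/


open scoped BoundedContinuousFunction

/-- A semitopological semigroup: a semigroup with a topology in which
multiplication is separately continuous. -/
class SemitopoSemigroup (S : Type*) [Semigroup S] [TopologicalSpace S] : Prop where
  cont_left : ∀ t : S, Continuous fun s : S => t * s
  cont_right : ∀ t : S, Continuous fun s : S => s * t

section Ell

variable {S : Type*}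

/-- Left translation: `(l_s f)(t) = f (s * t)`. -/
def lTrans [Mul S] (s : S) (f : S → ℂ) : S → ℂ := fun t => f (s * t)

/-- Right translation: `(r_s f)(t) = f (t * s)`. -/
def rTrans [Mul S] (s : S) (f : S → ℂ) : S → ℂ := fun t => f (t * s)

/-- A bounded complex-valued function, i.e. an element of `ℓ^∞(S)`. -/
def BddFun (f : S → ℂ) : Prop := ∃ C : ℝ, ∀ t, ‖f t‖ ≤ C

/-- The supremum norm on `ℓ^∞(S)`. -/
noncomputable def supNorm (f : S → ℂ) : ℝ := ⨆ t, ‖f t‖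

/-- `X` is a norm-closed linear subspace of `ℓ^∞(S)` containing the constants and
invariant under all left and right translations. -/
structure IsTransInvSubspace [Semigroup S] (X : Set (S → ℂ)) : Prop where
  bdd : ∀ f ∈ X, BddFun f
  add_mem : ∀ f ∈ X, ∀ g ∈ X, f + g ∈ X
  smul_mem : ∀ (c : ℂ), ∀ f ∈ X, c • f ∈ X
  const_mem : ∀ c : ℂ, (fun _ : S => c) ∈ X
  normClosed : ∀ f : S → ℂ, BddFun f →
    (∀ ε > 0, ∃ g ∈ X, ∀ t, ‖f t - g t‖ ≤ ε) → f ∈ X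
  lTrans_mem : ∀ (s : S), ∀ f ∈ X, lTrans s f ∈ X
  rTrans_mem : ∀ (s : S), ∀ f ∈ X, rTrans s f ∈ X

/-- `m` is a left invariant mean on `X`: a linear functional with `‖m‖ = m 1 = 1`
which is invariant under left translations. -/
structure IsLIM [Semigroup S] (X : Set (S → ℂ)) (m : (S → ℂ) → ℂ) : Prop where
  add : ∀ f ∈ X, ∀ g ∈ X, m (f + g) = m f + m g
  smul : ∀ (c : ℂ), ∀ f ∈ X, m (c • f) = c * m f
  norm_le : ∀ f ∈ X, ‖m f‖ ≤ supNorm f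
  map_one : m (fun _ : S => (1 : ℂ)) = 1
  left_inv : ∀ (s : S), ∀ f ∈ X, m (lTrans s f) = m f

/-- `X` has a left invariant mean. -/
def HasLIM [Semigroup S] (X : Set (S → ℂ)) : Prop := ∃ m, IsLIM X m

end Ell

/-- The weak topology on a normed space `E` over `𝕜`. -/
noncomputable def weakTop (𝕜 E : Type*) [NontriviallyNormedField 𝕜] [NormedAddCommGroup E]
    [NormedSpace 𝕜 E] : TopologicalSpace E :=
  ⨅ φ : E →L[𝕜] 𝕜, TopologicalSpace.induced φ inferInstance

section Semitopo

variable {S : Type*} [Semigroup S] [TopologicalSpace S] [SemitopoSemigroup S]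

/-- Left translation as a map on `C(S)`, the bounded continuous functions. -/
noncomputable def lTransB (s : S) (F : S →ᵇ ℂ) : S →ᵇ ℂ :=
  F.compContinuous ⟨fun t => s * t, SemitopoSemigroup.cont_left s⟩

/-- Right translation as a map on `C(S)`, the bounded continuous functions. -/
noncomputable def rTransB (s : S) (F : S →ᵇ ℂ) : S →ᵇ ℂ :=
  F.compContinuous ⟨fun t => t * s, SemitopoSemigroup.cont_right s⟩

/-- `F ∈ C(S)` is weakly almost periodic: its left orbit is relatively compact in
the weak topology of `C(S)`. -/
def IsWAPb (F : S →ᵇ ℂ) : Prop :=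
  @IsCompact _ (weakTop ℂ (S →ᵇ ℂ))
    (@closure _ (weakTop ℂ (S →ᵇ ℂ)) (Set.range fun s => lTransB s F))

/-- `F ∈ C(S)` is almost periodic: its left orbit is relatively compact in
the norm topology of `C(S)`. -/
def IsAPb (F : S →ᵇ ℂ) : Prop :=
  IsCompact (closure (Set.range fun s => lTransB s F))

/-- `F ∈ C(S)` is left uniformly continuous: `s ↦ l_s F` is norm continuous. -/
def IsLUCb (F : S →ᵇ ℂ) : Prop := Continuous fun s => lTransB s F

/-- `WAP(S)` as a subset of `ℓ^∞(S)`. -/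
def WAPset (S : Type*) [Semigroup S] [TopologicalSpace S] [SemitopoSemigroup S] :
    Set (S → ℂ) := {f | ∃ F : S →ᵇ ℂ, ⇑F = f ∧ IsWAPb F}

/-- `AP(S)` as a subset of `ℓ^∞(S)`. -/
def APset (S : Type*) [Semigroup S] [TopologicalSpace S] [SemitopoSemigroup S] :
    Set (S → ℂ) := {f | ∃ F : S →ᵇ ℂ, ⇑F = f ∧ IsAPb F}

/-- `LUC(S)` as a subset of `ℓ^∞(S)`. -/
def LUCset (S : Type*) [Semigroup S] [TopologicalSpace S] [SemitopoSemigroup S] :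
    Set (S → ℂ) := {f | ∃ F : S →ᵇ ℂ, ⇑F = f ∧ IsLUCb F}

end Semitopo

section Action

variable {S : Type*} {E : Type*} [NormedAddCommGroup E] [NormedSpace ℝ E]

/-- `act` is an action of the semigroup `S` on the set `K`. -/
def IsActionOn [Semigroup S] (act : S → E → E) (K : Set E) : Prop :=
  (∀ s : S, Set.MapsTo (act s) K K) ∧
    ∀ s s' : S, ∀ x ∈ K, act s (act s' x) = act (s * s') x

/-- The action is nonexpansive on `K`. -/
def NonexpansiveOn (act : S → E → E) (K : Set E) : Prop :=
  ∀ s : S, ∀ x ∈ K, ∀ y ∈ K, ‖act s x - act s y‖ ≤ ‖x - y‖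

/-- The action is weakly separately continuous on `K`. -/
def WeaklySepContOn [TopologicalSpace S] (act : S → E → E) (K : Set E) : Prop :=
  (∀ s : S, @ContinuousOn E E (weakTop ℝ E) (weakTop ℝ E) (act s) K) ∧
    (∀ x ∈ K, @Continuous S E _ (weakTop ℝ E) fun s => act s x)

/-- The action is jointly weakly continuous on `K`. -/
def JointlyWeaklyContOn [TopologicalSpace S] (act : S → E → E) (K : Set E) : Prop :=
  @ContinuousOn (S × E) E (@instTopologicalSpaceProd S E _ (weakTop ℝ E)) (weakTop ℝ E)
    (fun p => act p.1 p.2) (Set.univ ×ˢ K)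

/-- The action is weakly equicontinuous on `K`: the family `{x ↦ s • x : s ∈ S}` is
equicontinuous for the weak topology on `K`. -/
def WeaklyEquicontOn (act : S → E → E) (K : Set E) : Prop :=
  ∀ x ∈ K, ∀ W ∈ @nhds E (weakTop ℝ E) 0,
    ∃ U ∈ @nhdsWithin E (weakTop ℝ E) x K, ∀ y ∈ U, ∀ s : S, act s y - act s x ∈ W

/-- The action is weakly quasi-equicontinuous on `K`: every map in the closure of
`{x ↦ s • x : s ∈ S}` in `K^K` (with `K` carrying the weak topology) is continuous. -/
def WeaklyQuasiEquicontOn (act : S → E → E) (K : Set E) : Prop :=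
  ∀ T ∈ @closure (↥K → ↥K)
      (@Pi.topologicalSpace ↥K (fun _ => ↥K)
        (fun _ => TopologicalSpace.induced Subtype.val (weakTop ℝ E)))
      {F : ↥K → ↥K | ∃ s : S, ∀ x : ↥K, (F x : E) = act s x},
    @Continuous ↥K ↥K (TopologicalSpace.induced Subtype.val (weakTop ℝ E))
      (TopologicalSpace.induced Subtype.val (weakTop ℝ E)) T

end Action

/-! ### Fragmentability -/

/-- A nonempty open piece of `F` can be shrunk to one whose closure stays away from the convex
hull of a prescribed finite set, when no nonempty open piece of `F` has diameter at most `ε`. -/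
lemma frag_step {Y E : Type*} [TopologicalSpace Y] [RegularSpace Y]
    [NormedAddCommGroup E] [NormedSpace ℝ E] (j : Y → E)
    (hjc : ∀ C : Set E, Convex ℝ C → IsClosed C → IsClosed (j ⁻¹' C)) (F : Set Y)
    (ε : ℝ) (hε : 0 < ε)
    (H : ∀ U : Set Y, IsOpen U → (U ∩ F).Nonempty →
      ∃ x ∈ U ∩ F, ∃ y ∈ U ∩ F, ε < ‖j x - j y‖)
    (U : Set Y) (hU : IsOpen U) (hUF : (U ∩ F).Nonempty) (A : Set E) (hA : A.Finite) :
    ∃ V : Set Y, IsOpen V ∧ (V ∩ F).Nonempty ∧ closure V ⊆ U ∧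
      ∀ z ∈ closure V, ∀ w ∈ convexHull ℝ A, ε / 4 ≤ ‖j z - w‖ := by
  have avoid : ∀ T : Set E, T.Finite → ∃ V : Set Y, IsOpen V ∧ (V ∩ F).Nonempty ∧ V ⊆ U ∧
      ∀ z ∈ V, ∀ t ∈ T, ε / 2 < ‖j z - t‖ := by
    intro T hT
    induction T, hT using Set.Finite.induction_on with
    | empty => exact ⟨U, hU, hUF, subset_rfl, by simp⟩
    | @insert t T _ _ ih =>
      obtain ⟨V, hV, hVF, hVU, hVT⟩ := ih
      refine ⟨V \ j ⁻¹' Metric.closedBall t (ε / 2),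
        hV.sdiff (hjc _ (convex_closedBall _ _) Metric.isClosed_closedBall), ?_,
        Set.sdiff_subset.trans hVU, ?_⟩
      · -- otherwise this piece of `F` would lie in a ball of diameter `ε`
        by_contra hne
        obtain ⟨x, hx, y, hy, hxy⟩ := H V hV hVF
        have key : ∀ x ∈ V ∩ F, ‖j x - t‖ ≤ ε / 2 := by
          intro x hx
          by_contra hlt
          exact hne ⟨x, ⟨hx.1, by simpa [dist_eq_norm] using hlt⟩, hx.2⟩
        have := norm_sub_le_norm_sub_add_norm_sub (j x) t (j y)
        have h1 := key x hx
        have h2 := key y hy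
        rw [norm_sub_rev] at h2
        linarith
      · intro z hz s hs
        rcases hs with rfl | hs
        · simpa [dist_eq_norm] using hz.2
        · exact hVT z hz.1 s hs
  obtain ⟨T, -, hTf, hT⟩ :=
    (hA.isCompact_convexHull ℝ).finite_cover_balls (e := ε / 4) (by positivity)
  obtain ⟨V, hV, ⟨x, hxV, hxF⟩, hVU, hVT⟩ := avoid T hTf
  obtain ⟨N, hN, hNc, hNV⟩ := exists_mem_nhds_isClosed_subset (hV.mem_nhds hxV)
  have hcl : closure (interior N) ⊆ V := (closure_minimal interior_subset hNc).trans hNV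
  refine ⟨interior N, isOpen_interior, ⟨x, mem_interior_iff_mem_nhds.2 hN, hxF⟩,
    hcl.trans hVU, ?_⟩
  intro z hz w hw
  obtain ⟨t, ht, hwt⟩ := Set.mem_iUnion₂.1 (hT hw)
  have h1 := hVT z (hcl hz) t ht
  have h2 : ‖w - t‖ < ε / 4 := by simpa [dist_eq_norm] using hwt
  have := norm_sub_le_norm_sub_add_norm_sub (j z) w t
  linarith

/-- Weakly compact sets are fragmented by the norm: a nonempty set has nonempty relatively open
pieces of arbitrarily small norm diameter. -/
lemma exists_small_open {Y E : Type*} [TopologicalSpace Y] [CompactSpace Y] [T2Space Y]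
    [NormedAddCommGroup E] [NormedSpace ℝ E] (j : Y → E)
    (hjc : ∀ C : Set E, Convex ℝ C → IsClosed C → IsClosed (j ⁻¹' C)) (F : Set Y)
    (hF : F.Nonempty) (ε : ℝ) (hε : 0 < ε) :
    ∃ U : Set Y, IsOpen U ∧ (U ∩ F).Nonempty ∧
      ∀ x ∈ U ∩ F, ∀ y ∈ U ∩ F, ‖j x - j y‖ ≤ ε := by
  by_contra! H
  -- a state is an open set meeting `F` together with the finitely many points chosen so far
  let σ := {p : Set Y × Set Y // IsOpen p.1 ∧ (p.1 ∩ F).Nonempty ∧ p.2.Finite}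
  have step : ∀ p : σ, ∃ q : σ, closure q.1.1 ⊆ p.1.1 ∧ p.1.2 ⊆ q.1.2 ∧
      (q.1.1 ∩ q.1.2).Nonempty ∧
      ∀ z ∈ closure q.1.1, ∀ w ∈ convexHull ℝ (j '' p.1.2), ε / 4 ≤ ‖j z - w‖ := by
    rintro ⟨⟨U, A⟩, hU, hUF, hA⟩
    obtain ⟨V, hV, ⟨x, hxV, hxF⟩, hVU, hVT⟩ :=
      frag_step j hjc F ε hε H U hU hUF (j '' A) (hA.image j)
    exact ⟨⟨⟨V, insert x A⟩, hV, ⟨x, hxV, hxF⟩, hA.insert x⟩, hVU, Set.subset_insert _ _,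
      ⟨x, hxV, Set.mem_insert _ _⟩, hVT⟩
  choose next h1 h2 h3 h4 using step
  let p : ℕ → σ := fun n => next^[n] ⟨⟨Set.univ, ∅⟩, isOpen_univ, by simpa using hF,
    Set.finite_empty⟩
  have hp : ∀ n, p (n + 1) = next (p n) := fun n => Function.iterate_succ_apply' _ _ _
  have hmono : Monotone fun n => (p n).1.2 :=
    monotone_nat_of_le_succ fun n => by rw [hp]; exact h2 _
  obtain ⟨z, hz⟩ := IsCompact.nonempty_iInter_of_sequence_nonempty_isCompact_isClosed
    (fun n => closure (p (n + 1)).1.1 ∩ closure (⋃ k, (p k).1.2))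
    (fun n => Set.inter_subset_inter_left _ (by
      rw [hp (n + 1)]; exact (h1 _).trans subset_closure))
    (fun n => by
      have := h3 (p n)
      rw [← hp] at this
      obtain ⟨x, hx, hx'⟩ := this
      exact ⟨x, subset_closure hx, subset_closure (Set.mem_iUnion.2 ⟨n + 1, hx'⟩)⟩)
    (isClosed_closure.inter isClosed_closure).isCompact
    (fun n => isClosed_closure.inter isClosed_closure)
  rw [Set.mem_iInter] at hz
  -- `z` is a norm limit of convex combinations of the chosen points, but it stays away from them
  let D : Set E := ⋃ k, convexHull ℝ (j '' (p k).1.2)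
  have hD : Convex ℝ D := Directed.convex_iUnion
    (Monotone.directed_le fun a b hab =>
      convexHull_mono (Set.image_mono (hmono hab)))
    (fun _ => convex_convexHull _ _)
  have hzD : z ∈ j ⁻¹' closure D := by
    refine closure_minimal ?_ (hjc _ hD.closure isClosed_closure) (hz 0).2
    intro x hx
    obtain ⟨k, hk⟩ := Set.mem_iUnion.1 hx
    exact subset_closure (Set.mem_iUnion.2 ⟨k, subset_convexHull _ _ ⟨x, hk, rfl⟩⟩)
  obtain ⟨w, hw, hzw⟩ := Metric.mem_closure_iff.1 hzD (ε / 4) (by positivity)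
  obtain ⟨k, hk⟩ := Set.mem_iUnion.1 hw
  have hzk := (hz k).1
  rw [hp] at hzk
  have := h4 (p k) z hzk w hk
  rw [dist_eq_norm] at hzw
  linarith

/-! ### Positive functionals and their supports -/

/-- A positive normalized linear functional on `C(Y, ℝ)`, i.e. a Radon probability measure on a
compact Hausdorff space `Y`. -/
structure IsProbFunctional {Y : Type*} [TopologicalSpace Y] (Λ : C(Y, ℝ) →ₗ[ℝ] ℝ) : Prop where
  nonneg : ∀ f : C(Y, ℝ), (∀ y, 0 ≤ f y) → 0 ≤ Λ f
  one : Λ 1 = 1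

/-- The support of the measure represented by `Λ`: the points at which only functions of positive
integral can be positive. -/
def funSupp {Y : Type*} [TopologicalSpace Y] (Λ : C(Y, ℝ) →ₗ[ℝ] ℝ) : Set Y :=
  {x | ∀ f : C(Y, ℝ), (∀ y, 0 ≤ f y) → 0 < f x → 0 < Λ f}

section Functional

variable {Y : Type*} [TopologicalSpace Y] {Λ : C(Y, ℝ) →ₗ[ℝ] ℝ}

lemma IsProbFunctional.mono (hΛ : IsProbFunctional Λ) {f g : C(Y, ℝ)} (h : ∀ y, f y ≤ g y) :
    Λ f ≤ Λ g := by
  have := hΛ.nonneg (g - f) fun y => by simpa using h y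
  rw [map_sub] at this
  linarith

lemma isClosed_funSupp : IsClosed (funSupp Λ) := by
  rw [← isOpen_compl_iff, isOpen_iff_mem_nhds]
  intro x hx
  simp only [funSupp, Set.mem_compl_iff, Set.mem_ofPred_eq, not_forall] at hx
  obtain ⟨f, hf, hfx, hΛf⟩ := hx
  filter_upwards [(isOpen_lt continuous_const f.continuous).mem_nhds hfx] with y hy hys
  exact hΛf (hys f hf hy)

/-- Functions vanishing on the support have nonpositive (hence zero) integral: outside the support
they are locally, hence on compact sets, dominated by functions of integral zero. -/
lemma IsProbFunctional.le_zero [CompactSpace Y] (hΛ : IsProbFunctional Λ) (g : C(Y, ℝ))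
    (hg : ∀ x ∈ funSupp Λ, g x = 0) : Λ g ≤ 0 := by
  refine le_of_forall_pos_le_add fun ε hε => ?_
  have hC : IsCompact {x | ε ≤ g x} := (isClosed_le continuous_const g.continuous).isCompact
  obtain ⟨h, h0, hΛh, hgh⟩ : ∃ h : C(Y, ℝ), (∀ y, 0 ≤ h y) ∧ Λ h = 0 ∧
      ∀ x ∈ {x | ε ≤ g x}, g x ≤ h x := by
    refine hC.induction_on (p := fun s => ∃ h : C(Y, ℝ), (∀ y, 0 ≤ h y) ∧ Λ h = 0 ∧
      ∀ x ∈ s, g x ≤ h x) ⟨0, by simp, by simp, by simp⟩ ?_ ?_ ?_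
    · rintro s t hst ⟨h, h0, hh, hl⟩
      exact ⟨h, h0, hh, fun x hx => hl x (hst hx)⟩
    · rintro s t ⟨h, h0, hh, hl⟩ ⟨h', h0', hh', hl'⟩
      refine ⟨h + h', fun y => add_nonneg (h0 y) (h0' y), by rw [map_add, hh, hh', add_zero], ?_⟩
      rintro x (hx | hx)
      · exact (hl x hx).trans (le_add_of_nonneg_right (h0' x))
      · exact (hl' x hx).trans (le_add_of_nonneg_left (h0 x))
    · intro x hx
      have hgx : 0 < g x := hε.trans_le hx
      have hxs : x ∉ funSupp Λ := fun hxs => hgx.ne' (hg x hxs)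
      simp only [funSupp, Set.mem_ofPred_eq, not_forall] at hxs
      obtain ⟨f, hf, hfx, hΛf⟩ := hxs
      have hΛf0 : Λ f = 0 := le_antisymm (not_lt.1 hΛf) (hΛ.nonneg f hf)
      have hlt : g x < ((2 * g x / f x) • f) x := by
        have : ((2 * g x / f x) • f) x = 2 * g x := by
          simp only [ContinuousMap.smul_apply, smul_eq_mul]
          field_simp
        rw [this]; linarith
      refine ⟨{y | g y < ((2 * g x / f x) • f) y}, mem_nhdsWithin_of_mem_nhds
        ((isOpen_lt g.continuous (ContinuousMap.continuous _)).mem_nhds hlt),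
        (2 * g x / f x) • f, fun y => ?_, by rw [map_smul, hΛf0, smul_zero], fun y hy => le_of_lt hy⟩
      have := hf y
      simp only [ContinuousMap.smul_apply, smul_eq_mul]
      positivity
  have := hΛ.mono (f := g) (g := ε • (1 : C(Y, ℝ)) + h) fun y => by
    simp only [ContinuousMap.add_apply, ContinuousMap.smul_apply, ContinuousMap.one_apply,
      smul_eq_mul, mul_one]
    rcases le_or_gt ε (g y) with hy | hy
    · linarith [hgh y hy]
    · linarith [h0 y]
  rw [map_add, map_smul, hΛ.one, hΛh, smul_eq_mul] at this
  linarith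

lemma IsProbFunctional.mono_on [CompactSpace Y] (hΛ : IsProbFunctional Λ) {f g : C(Y, ℝ)}
    (h : ∀ x ∈ funSupp Λ, f x ≤ g x) : Λ f ≤ Λ g := by
  have h1 := hΛ.le_zero ((f - g) ⊔ 0) fun x hx => by
    simpa using h x hx
  have h2 : Λ (f - g) ≤ Λ ((f - g) ⊔ 0) := hΛ.mono fun y => by simp
  rw [map_sub] at h2
  linarith

lemma IsProbFunctional.funSupp_nonempty [CompactSpace Y] (hΛ : IsProbFunctional Λ) :
    (funSupp Λ).Nonempty := by
  by_contra hne
  have := hΛ.le_zero 1 fun x hx => absurd ⟨x, hx⟩ hne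
  rw [hΛ.one] at this
  linarith

/-- A measure-preserving map sends a subset of the support onto the whole support: the image of the
support is closed and has full measure. -/
lemma IsProbFunctional.subset_image [CompactSpace Y] [T2Space Y] (hΛ : IsProbFunctional Λ)
    (a : C(Y, Y)) (hinv : ∀ f : C(Y, ℝ), Λ (f.comp a) = Λ f) :
    funSupp Λ ⊆ a '' funSupp Λ := by
  intro x hx
  by_contra hxa
  have hcl : IsClosed (a '' funSupp Λ) :=
    (isClosed_funSupp.isCompact.image a.continuous).isClosed
  obtain ⟨f, hf0, hf1, hf⟩ := exists_continuous_zero_one_of_isClosed hcl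
    (isClosed_singleton (x := x)) (Set.disjoint_singleton_right.2 hxa)
  have h1 : 0 < Λ f := hx f (fun y => (hf y).1) (by rw [hf1 rfl]; simp)
  have h2 : Λ (f.comp a) ≤ 0 := hΛ.le_zero _ fun y hy => hf0 ⟨y, hy, rfl⟩
  rw [hinv] at h2
  linarith

lemma mapsTo_funSupp (a : C(Y, Y)) (hinv : ∀ f : C(Y, ℝ), Λ (f.comp a) = Λ f) :
    Set.MapsTo a (funSupp Λ) (funSupp Λ) := by
  intro x hx f hf hfx
  rw [← hinv]
  exact hx _ (fun y => hf _) hfx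

/-- If a set of positive measure can be moved into each of finitely many disjoint closed sets by
measure-preserving maps, then the number of these sets is bounded. -/
lemma IsProbFunctional.card_mul_le [CompactSpace Y] [T2Space Y] (hΛ : IsProbFunctional Λ)
    {n : ℕ} (hn : 0 < n) (a : Fin n → C(Y, Y))
    (hinv : ∀ i, ∀ f : C(Y, ℝ), Λ (f.comp (a i)) = Λ f)
    (B : Fin n → Set Y) (hB : ∀ i, IsClosed (B i)) (hdis : ∀ i k, i ≠ k → Disjoint (B i) (B k))
    (φ : C(Y, ℝ)) (hφ1 : ∀ y, φ y ≤ 1)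
    (hφ : ∀ i, ∀ x ∈ funSupp Λ, 0 < φ x → a i x ∈ B i) : n * Λ φ ≤ 1 := by
  obtain ⟨p, hp⟩ := PartitionOfUnity.exists_isSubordinate (isClosed_univ (X := Y))
    (fun i => (⋃ k ∈ {k | k ≠ i}, B k)ᶜ)
    (fun i => (Set.Finite.isClosed_biUnion (Set.toFinite _) fun k _ => hB k).isOpen_compl) (by
      intro x _
      by_cases h : ∃ k, x ∈ B k
      · obtain ⟨k, hk⟩ := h
        refine Set.mem_iUnion.2 ⟨k, fun hx => ?_⟩
        obtain ⟨l, hl, hxl⟩ := Set.mem_iUnion₂.1 hx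
        exact Set.disjoint_left.1 (hdis l k hl) hxl hk
      · refine Set.mem_iUnion.2 ⟨⟨0, hn⟩, fun hx => ?_⟩
        obtain ⟨l, hl, hxl⟩ := Set.mem_iUnion₂.1 hx
        exact h ⟨l, hxl⟩)
  have hsum : ∀ x, ∑ i, p i x = 1 := fun x => by
    rw [← finsum_eq_sum_of_fintype]
    exact p.sum_eq_one (Set.mem_univ x)
  have hone : ∀ i, ∀ x ∈ B i, p i x = 1 := by
    intro i x hx
    rw [← hsum x, Finset.sum_eq_single i _ (by simp)]
    intro k _ hk
    by_contra hne
    exact hp k (subset_tsupport _ hne) (Set.mem_iUnion₂.2 ⟨i, hk.symm, hx⟩)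
  have hle : ∀ i, Λ φ ≤ Λ (p i) := by
    intro i
    rw [← hinv i (p i)]
    refine hΛ.mono_on fun x hx => ?_
    rcases le_or_gt (φ x) 0 with h | h
    · exact h.trans (p.nonneg i _)
    · exact (hφ1 x).trans (hone i _ (hφ i x hx h)).ge
  calc (n : ℝ) * Λ φ = ∑ _i : Fin n, Λ φ := by simp
    _ ≤ ∑ i, Λ (p i) := Finset.sum_le_sum fun i _ => hle i
    _ = Λ (∑ i, p i) := (map_sum Λ _ _).symm
    _ = Λ 1 := by
      congr 1
      ext x
      simpa using hsum x
    _ = 1 := hΛ.one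

end Functional

/-! ### Minimal invariant sets -/

lemma exists_minimal_closed {Y : Type*} [TopologicalSpace Y] [CompactSpace Y]
    (P : Set Y → Prop) (hPc : ∀ s, P s → IsClosed s)
    (hPi : ∀ c : Set (Set Y), c.Nonempty → (∀ s ∈ c, P s) → P (⋂₀ c))
    (s₀ : Set Y) (h₀ : P s₀) (hne : s₀.Nonempty) :
    ∃ s ⊆ s₀, P s ∧ s.Nonempty ∧ ∀ t ⊆ s, P t → t.Nonempty → t = s := by
  obtain ⟨m, hm, hmin⟩ := zorn_superset_nonempty {s | P s ∧ s.Nonempty} (by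
    intro c hc hchain hcne
    refine ⟨⋂₀ c, ⟨hPi c hcne fun s hs => (hc hs).1, ?_⟩, fun s hs => Set.sInter_subset_of_mem hs⟩
    have : Nonempty c := hcne.to_subtype
    exact IsCompact.nonempty_sInter_of_directed_nonempty_isCompact_isClosed
      (fun s hs t ht => (hchain.total hs ht).elim (fun h => ⟨s, hs, subset_rfl, h⟩)
        fun h => ⟨t, ht, h, subset_rfl⟩) (fun s hs => (hc hs).2)
      (fun s hs => (hPc s (hc hs).1).isCompact) (fun s hs => hPc s (hc hs).1)) s₀ ⟨h₀, hne⟩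
  exact ⟨m, hm, hmin.prop.1, hmin.prop.2, fun t ht htP htne =>
    Set.Subset.antisymm ht (hmin.le_of_le ⟨htP, htne⟩ ht)⟩

/-! ### The fixed point -/

/-- Averaging a finite `d / 2`-net of a set of diameter at most `d` produces a point whose
distances to all points of the set are bounded away from `d`. -/
lemma exists_nondiametral {E : Type*} [NormedAddCommGroup E] [NormedSpace ℝ E] (M : Set E)
    (hM : M.Nonempty) (d : ℝ) (hd : 0 < d) (hdiam : ∀ x ∈ M, ∀ y ∈ M, ‖x - y‖ ≤ d)
    (T : Finset E) (hTM : ∀ t ∈ T, t ∈ M) (hT : ∀ x ∈ M, ∃ t ∈ T, ‖x - t‖ ≤ d / 2) :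
    ∃ u ∈ convexHull ℝ M, ∃ r < d, 0 ≤ r ∧ ∀ x ∈ M, ‖u - x‖ ≤ r := by
  classical
  have hTne : T.Nonempty := by
    obtain ⟨x, hx⟩ := hM
    obtain ⟨t, ht, -⟩ := hT x hx
    exact ⟨t, ht⟩
  have hc : (0 : ℝ) < T.card := by exact_mod_cast hTne.card_pos
  have hc1 : (1 : ℝ) ≤ T.card := by exact_mod_cast hTne.card_pos
  have hsum : ∑ _t ∈ T, (T.card : ℝ)⁻¹ = 1 := by
    rw [Finset.sum_const, nsmul_eq_mul, mul_inv_cancel₀ hc.ne']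
  refine ⟨∑ t ∈ T, (T.card : ℝ)⁻¹ • t, (convex_convexHull ℝ M).sum_mem (fun _ _ => by positivity)
    hsum (fun t ht => subset_convexHull _ _ (hTM t ht)), d - (T.card : ℝ)⁻¹ * (d / 2), ?_, ?_, ?_⟩
  · have : 0 < (T.card : ℝ)⁻¹ * (d / 2) := by positivity
    linarith
  · have : (T.card : ℝ)⁻¹ ≤ 1 := inv_le_one_of_one_le₀ hc1
    nlinarith
  · intro x hx
    obtain ⟨t₀, ht₀, hxt₀⟩ := hT x hx
    have e : ∑ t ∈ T, (T.card : ℝ)⁻¹ • t - x = ∑ t ∈ T, (T.card : ℝ)⁻¹ • (t - x) := by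
      simp only [smul_sub, Finset.sum_sub_distrib, ← Finset.sum_smul, hsum, one_smul]
    rw [e]
    calc ‖∑ t ∈ T, (T.card : ℝ)⁻¹ • (t - x)‖
        ≤ ∑ t ∈ T, (T.card : ℝ)⁻¹ * (d - if t = t₀ then d / 2 else 0) := by
          refine norm_sum_le_of_le _ fun t ht => ?_
          rw [norm_smul, Real.norm_of_nonneg (by positivity)]
          gcongr
          split_ifs with h
          · rw [h, norm_sub_rev]; linarith
          · rw [sub_zero]; exact hdiam t (hTM t ht) x hx
      _ = d - (T.card : ℝ)⁻¹ * (d / 2) := by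
          simp only [mul_sub, Finset.sum_sub_distrib, ← Finset.sum_mul, hsum, one_mul,
            mul_ite, mul_zero, Finset.sum_ite_eq', if_pos ht₀]

section Core

variable {S Y E : Type*} [Semigroup S] [TopologicalSpace Y] [CompactSpace Y] [T2Space Y]
  [NormedAddCommGroup E] [NormedSpace ℝ E]

/-- A minimal closed invariant set which is the support of an invariant measure is totally bounded
in norm, with nets taken from the set itself. A small open piece `U` of `F` has positive measure
`c`; a point `u` of `F` in `U` drags `U` along its orbit, so at most `1 / c` orbit points are
pairwise far apart, and the orbit is weakly dense by minimality. -/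
lemma exists_net (j : Y → E)
    (hjc : ∀ C : Set E, Convex ℝ C → IsClosed C → IsClosed (j ⁻¹' C))
    (a : S → C(Y, Y)) (hmul : ∀ s t y, a s (a t y) = a (s * t) y)
    (hne : ∀ s x y, ‖j (a s x) - j (a s y)‖ ≤ ‖j x - j y‖)
    (Λ : C(Y, ℝ) →ₗ[ℝ] ℝ) (hΛ : IsProbFunctional Λ)
    (hinv : ∀ s, ∀ f : C(Y, ℝ), Λ (f.comp (a s)) = Λ f)
    (hmin : ∀ t ⊆ funSupp Λ, IsClosed t → (∀ s, Set.MapsTo (a s) t t) → t.Nonempty →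
      t = funSupp Λ) [Nonempty S] (ε : ℝ) (hε : 0 < ε) :
    ∃ T : Finset E, (∀ t ∈ T, t ∈ j '' funSupp Λ) ∧
      ∀ x ∈ j '' funSupp Λ, ∃ t ∈ T, ‖x - t‖ ≤ 2 * ε := by
  classical
  obtain ⟨U, hU, ⟨u, huU, huF⟩, hUd⟩ :=
    exists_small_open j hjc (funSupp Λ) hΛ.funSupp_nonempty ε hε
  have hF : ∀ s, Set.MapsTo (a s) (funSupp Λ) (funSupp Λ) := fun s => mapsTo_funSupp _ (hinv s)
  obtain ⟨φ, hφ0, hφ1, hφ⟩ := exists_continuous_zero_one_of_isClosed hU.isClosed_compl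
    (isClosed_singleton (x := u)) (Set.disjoint_singleton_right.2 (by simpa using huU))
  have hc : 0 < Λ φ := huF φ (fun y => (hφ y).1) (by rw [hφ1 rfl]; simp)
  obtain ⟨T, hT⟩ : ∃ T : Finset S, ∀ s, ∃ t ∈ T, ‖j (a s u) - j (a t u)‖ ≤ 2 * ε := by
    by_contra! H
    obtain ⟨q, -, hq⟩ := exists_seq_of_forall_finset_exists (fun _ : S => True)
      (fun t s => 2 * ε < ‖j (a s u) - j (a t u)‖) (fun T _ => by
        obtain ⟨s, hs⟩ := H T
        exact ⟨s, trivial, hs⟩)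
    obtain ⟨n, hn⟩ := exists_nat_gt (1 / Λ φ)
    have hn0 : 0 < n := by
      have : (0 : ℝ) < n := lt_trans (by positivity) hn
      exact_mod_cast this
    have hfar : ∀ i k : Fin n, i ≠ k → 2 * ε < ‖j (a (q i) u) - j (a (q k) u)‖ := by
      intro i k hik
      rcases lt_or_gt_of_ne (Fin.val_ne_of_ne hik) with h | h
      · rw [norm_sub_rev]; exact hq _ _ h
      · exact hq _ _ h
    have := hΛ.card_mul_le hn0 (fun i => a (q i)) (fun i => hinv _)
      (fun i => j ⁻¹' Metric.closedBall (j (a (q i) u)) ε)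
      (fun i => hjc _ (convex_closedBall _ _) Metric.isClosed_closedBall)
      (fun i k hik => Disjoint.preimage _ (Metric.closedBall_disjoint_closedBall (by
        rw [dist_eq_norm]; linarith [hfar i k hik])))
      φ (fun y => (hφ y).2) (fun i x hx hφx => by
        have hxU : x ∈ U := by
          by_contra hxU
          exact hφx.ne' (hφ0 hxU)
        rw [Set.mem_preimage, Metric.mem_closedBall, dist_eq_norm]
        exact (hne _ _ _).trans (hUd x ⟨hxU, hx⟩ u ⟨huU, huF⟩))
    rw [div_lt_iff₀ hc] at hn
    linarith
  have horb : closure (Set.range fun s => a s u) = funSupp Λ := by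
    refine hmin _ (closure_minimal ?_ isClosed_funSupp) isClosed_closure ?_
      (Set.range_nonempty _).closure
    · rintro _ ⟨s, rfl⟩
      exact hF s huF
    · intro s
      refine Set.MapsTo.closure ?_ (a s).continuous
      rintro _ ⟨t, rfl⟩
      exact ⟨s * t, (hmul s t u).symm⟩
  refine ⟨T.image fun t => j (a t u), ?_, ?_⟩
  · intro t ht
    obtain ⟨s, -, rfl⟩ := Finset.mem_image.1 ht
    exact ⟨_, hF s huF, rfl⟩
  · rintro _ ⟨x, hx, rfl⟩
    rw [← horb] at hx
    have : closure (Set.range fun s => a s u) ⊆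
        ⋃ t ∈ (T : Set S), j ⁻¹' Metric.closedBall (j (a t u)) (2 * ε) := by
      refine closure_minimal ?_ (Set.Finite.isClosed_biUnion (Finset.finite_toSet T) fun t _ =>
        hjc _ (convex_closedBall _ _) Metric.isClosed_closedBall)
      rintro _ ⟨s, rfl⟩
      obtain ⟨t, ht, hst⟩ := hT s
      exact Set.mem_iUnion₂.2 ⟨t, ht, by simpa [dist_eq_norm] using hst⟩
    obtain ⟨t, ht, hxt⟩ := Set.mem_iUnion₂.1 (this hx)
    exact ⟨j (a t u), Finset.mem_image_of_mem _ ht, by simpa [dist_eq_norm] using hxt⟩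

/-- The fixed point theorem for a compact Hausdorff space `Y` identified through `j` with a convex
set whose norm-closed convex pieces are closed in `Y`. The invariant mean enters as a family of
invariant probability functionals `Λ y`, each determined by the values along the orbit of `y`. -/
theorem core_fixed_point [Nonempty Y] [Nonempty S] (j : Y → E) (hj : Function.Injective j)
    (hjc : ∀ C : Set E, Convex ℝ C → IsClosed C → IsClosed (j ⁻¹' C))
    (hconv : Convex ℝ (Set.range j))
    (a : S → C(Y, Y)) (hmul : ∀ s t y, a s (a t y) = a (s * t) y)
    (hne : ∀ s x y, ‖j (a s x) - j (a s y)‖ ≤ ‖j x - j y‖)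
    (Λ : Y → C(Y, ℝ) →ₗ[ℝ] ℝ) (hΛ : ∀ y, IsProbFunctional (Λ y))
    (hinv : ∀ y s, ∀ f : C(Y, ℝ), Λ y (f.comp (a s)) = Λ y f)
    (horb : ∀ y, ∀ f : C(Y, ℝ), (∀ s, f (a s y) = 0) → Λ y f = 0) :
    ∃ x, ∀ s, a s x = x := by
  obtain ⟨Q, -, ⟨hQc, hQi, hQv⟩, hQne, hQmin⟩ := exists_minimal_closed
    (fun Q : Set Y => IsClosed Q ∧ (∀ s, Set.MapsTo (a s) Q Q) ∧ Convex ℝ (j '' Q))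
    (fun s hs => hs.1) (by
      intro c hc hP
      refine ⟨isClosed_sInter fun s hs => (hP s hs).1, fun s x hx t ht =>
        (hP t ht).2.1 s (hx t ht), ?_⟩
      rw [Set.sInter_eq_biInter, hj.injOn.image_biInter_eq hc]
      exact convex_iInter₂ fun s hs => (hP s hs).2.2)
    Set.univ ⟨isClosed_univ, fun s => Set.mapsTo_univ _ _, by rwa [Set.image_univ]⟩
    Set.univ_nonempty
  obtain ⟨F, hFQ, ⟨hFc, hFi⟩, ⟨y, hyF⟩, hFmin⟩ := exists_minimal_closed
    (fun F : Set Y => IsClosed F ∧ ∀ s, Set.MapsTo (a s) F F)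
    (fun s hs => hs.1) (fun c _ hP => ⟨isClosed_sInter fun s hs => (hP s hs).1,
      fun s x hx t ht => (hP t ht).2 s (hx t ht)⟩) Q ⟨hQc, hQi⟩ hQne
  have hsub : funSupp (Λ y) ⊆ F := by
    intro x hx
    by_contra hxF
    obtain ⟨f, hf0, hf1, hf⟩ := exists_continuous_zero_one_of_isClosed hFc
      (isClosed_singleton (x := x)) (Set.disjoint_singleton_right.2 hxF)
    have h1 : 0 < Λ y f := hx f (fun y => (hf y).1) (by rw [hf1 rfl]; simp)
    exact h1.ne' (horb y f fun s => hf0 (hFi s hyF))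
  have hsupp : funSupp (Λ y) = F := hFmin _ hsub
    ⟨isClosed_funSupp, fun s => mapsTo_funSupp _ (hinv y s)⟩ (hΛ y).funSupp_nonempty
  have hnet := exists_net j hjc a hmul hne (Λ y) (hΛ y) (hinv y) (by
    rw [hsupp]
    exact fun t ht h1 h2 h3 => hFmin t ht ⟨h1, h2⟩ h3)
  have honto : ∀ s, F ⊆ a s '' F := by
    intro s
    have := (hΛ y).subset_image (a s) (hinv y s)
    rwa [hsupp] at this
  rw [hsupp] at hnet
  have hbdd : Bornology.IsBounded (j '' F) := by
    obtain ⟨T, -, hT⟩ := hnet 1 one_pos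
    refine ((Bornology.isBounded_biUnion_finset T).2 fun t _ =>
      Metric.isBounded_closedBall (x := t) (r := 2 * 1)).subset ?_
    intro x hx
    obtain ⟨t, ht, hxt⟩ := hT x hx
    exact Set.mem_iUnion₂.2 ⟨t, ht, by simpa [dist_eq_norm] using hxt⟩
  have hdist : ∀ x ∈ j '' F, ∀ z ∈ j '' F, ‖x - z‖ ≤ Metric.diam (j '' F) := by
    intro x hx z hz
    rw [← dist_eq_norm]
    exact Metric.dist_le_diam_of_mem hbdd hx hz
  rcases (Metric.diam_nonneg (s := j '' F)).eq_or_lt with hd | hd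
  · -- `F` is a single point
    refine ⟨y, fun s => hj ?_⟩
    have := hdist _ ⟨_, hFi s hyF, rfl⟩ _ ⟨_, hyF, rfl⟩
    rw [← hd] at this
    exact sub_eq_zero.1 (norm_le_zero_iff.1 this)
  · exfalso
    obtain ⟨T, hTF, hT⟩ := hnet (Metric.diam (j '' F) / 4) (by positivity)
    obtain ⟨v, hv, r, hrd, hr0, hvr⟩ := exists_nondiametral (j '' F) ⟨_, y, hyF, rfl⟩ _ hd hdist T
      hTF (fun x hx => by
        obtain ⟨t, ht, h⟩ := hT x hx
        exact ⟨t, ht, by linarith⟩)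
    obtain ⟨q, hqQ, rfl⟩ := convexHull_min (Set.image_mono hFQ) hQv hv
    -- the points of `Q` within `r` of all of `F` form an invariant closed convex set
    let D : Set E := ⋂ z ∈ F, Metric.closedBall (j z) r
    have hDv : Convex ℝ D := convex_iInter₂ fun z _ => convex_closedBall _ _
    have hDc : IsClosed D := isClosed_biInter fun z _ => Metric.isClosed_closedBall
    have hmem : ∀ x, j x ∈ D ↔ ∀ z ∈ F, ‖j x - j z‖ ≤ r := by
      intro x
      simp [D, dist_eq_norm]
    have hQ1 : Q ∩ j ⁻¹' D = Q := by
      refine hQmin _ Set.inter_subset_left ⟨hQc.inter (hjc D hDv hDc), ?_, ?_⟩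
        ⟨q, hqQ, (hmem q).2 fun z hz => hvr _ ⟨z, hz, rfl⟩⟩
      · rintro s x ⟨hxQ, hxD⟩
        refine ⟨hQi s hxQ, (hmem _).2 fun z hz => ?_⟩
        obtain ⟨w, hw, rfl⟩ := honto s hz
        exact (hne s x w).trans ((hmem x).1 hxD w hw)
      · rw [Set.image_inter_preimage]
        exact hQv.inter hDv
    have : Metric.diam (j '' F) ≤ r := by
      refine Metric.diam_le_of_forall_dist_le hr0 ?_
      rintro _ ⟨x, hx, rfl⟩ _ ⟨z, hz, rfl⟩
      have hxQ : x ∈ Q ∩ j ⁻¹' D := by rw [hQ1]; exact hFQ hx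
      rw [dist_eq_norm]
      exact (hmem x).1 hxQ.2 z hz
    linarith

end Core

/-! ### From invariant means to invariant functionals -/

/-- The functional on `C(Y, ℝ)` obtained by averaging functions along the orbit of `y`. -/
noncomputable def orbitFunctional {S Y : Type*} [Semigroup S] [TopologicalSpace Y]
    {X : Set (S → ℂ)} {m : (S → ℂ) → ℂ} (hm : IsLIM X m) (o : S → Y)
    (ho : ∀ f : C(Y, ℝ), (fun s => ((f (o s) : ℝ) : ℂ)) ∈ X) : C(Y, ℝ) →ₗ[ℝ] ℝ where
  toFun f := (m fun s => ((f (o s) : ℝ) : ℂ)).re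
  map_add' f g := by
    rw [← Complex.add_re, ← hm.add _ (ho f) _ (ho g)]
    congr 2
    ext s
    simp
  map_smul' c f := by
    have := hm.smul c _ (ho f)
    rw [RingHom.id_apply, smul_eq_mul, ← Complex.re_ofReal_mul, ← this]
    congr 2
    ext s
    simp

lemma supNorm_le {S : Type*} [Nonempty S] {f : S → ℂ} {C : ℝ} (h : ∀ s, ‖f s‖ ≤ C) :
    supNorm f ≤ C := ciSup_le h

lemma orbitFunctional_isProb {S Y : Type*} [Semigroup S] [Nonempty S] [TopologicalSpace Y]
    [CompactSpace Y] {X : Set (S → ℂ)} {m : (S → ℂ) → ℂ} (hm : IsLIM X m) (o : S → Y)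
    (ho : ∀ f : C(Y, ℝ), (fun s => ((f (o s) : ℝ) : ℂ)) ∈ X) :
    IsProbFunctional (orbitFunctional hm o ho) := by
  have h1 : orbitFunctional hm o ho 1 = 1 := by
    change (m fun s => (((1 : C(Y, ℝ)) (o s) : ℝ) : ℂ)).re = 1
    simp [hm.map_one]
  refine ⟨fun f hf => ?_, h1⟩
  -- `‖M - f‖ ≤ M` for `0 ≤ f ≤ M`, so the mean of `M - f` is at most `M`
  have hle : orbitFunctional hm o ho (‖f‖ • 1 - f) ≤ ‖f‖ := by
    refine (Complex.re_le_norm _).trans ((hm.norm_le _ (ho _)).trans (supNorm_le fun s => ?_))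
    have h2 := f.norm_coe_le_norm (o s)
    have h3 := hf (o s)
    rw [Real.norm_of_nonneg h3] at h2
    rw [Complex.norm_real, Real.norm_eq_abs, abs_le]
    simp only [ContinuousMap.sub_apply, ContinuousMap.smul_apply, ContinuousMap.one_apply,
      smul_eq_mul, mul_one]
    constructor <;> linarith
  rw [map_sub, map_smul, h1, smul_eq_mul, mul_one] at hle
  linarith

/-- The fixed point theorem for an action on a compact subset of a Hausdorff space `Z` injected into
`E` so that preimages of norm-closed convex sets are closed. Taking `Z` to be a separate type keeps
the weak topology apart from the norm topology of `E`. -/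
theorem fixed_point_of_topology {S Z E : Type*} [Semigroup S] [TopologicalSpace Z] [T2Space Z]
    [NormedAddCommGroup E] [NormedSpace ℝ E] (i : Z → E) (hi : Function.Injective i)
    (hic : ∀ C : Set E, Convex ℝ C → IsClosed C → IsClosed (i ⁻¹' C))
    (X : Set (S → ℂ)) (hLIM : HasLIM X) (K : Set Z) (act : S → Z → Z)
    (hne : K.Nonempty) (hcomp : IsCompact K) (hconv : Convex ℝ (i '' K))
    (hmaps : ∀ s, Set.MapsTo (act s) K K)
    (hmul : ∀ s s', ∀ x ∈ K, act s (act s' x) = act (s * s') x)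
    (hcont : ∀ s, ContinuousOn (act s) K)
    (hnon : ∀ s, ∀ x ∈ K, ∀ y ∈ K, ‖i (act s x) - i (act s y)‖ ≤ ‖i x - i y‖)
    (hy : ∀ y ∈ K, ∀ f : Z → ℂ, ContinuousOn f K → (fun s : S => f (act s y)) ∈ X) :
    ∃ x ∈ K, ∀ s : S, act s x = x := by
  classical
  obtain ⟨m, hm⟩ := hLIM
  have := isCompact_iff_compactSpace.1 hcomp
  have := hne.to_subtype
  rcases isEmpty_or_nonempty S with hS | hS
  · obtain ⟨x, hx⟩ := hne
    exact ⟨x, hx, fun s => hS.elim s⟩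
  let a : S → C(K, K) := fun s => ⟨(hmaps s).restrict (act s) K K, (hcont s).mapsToRestrict (hmaps s)⟩
  have hX : ∀ (y : K) (f : C(K, ℝ)), (fun s => ((f (a s y) : ℝ) : ℂ)) ∈ X := by
    intro y f
    have h := hy y y.2 (fun x => if h : x ∈ K then ((f ⟨x, h⟩ : ℝ) : ℂ) else 0) (by
      rw [continuousOn_iff_continuous_domRestrict]
      refine (Complex.continuous_ofReal.comp f.continuous).congr fun x => ?_
      simp)
    convert h using 2 with s
    rw [dif_pos (hmaps s y.2)]
    rfl
  obtain ⟨x, hx⟩ := core_fixed_point (fun x : K => i x) (hi.comp Subtype.val_injective)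
    (fun C hC hC' => (hic C hC hC').preimage continuous_subtype_val)
    (by rwa [Set.image_eq_range] at hconv) a
    (fun s t y => Subtype.ext (hmul s t y y.2)) (fun s x y => hnon s x x.2 y y.2)
    (fun y => orbitFunctional hm (fun s => a s y) (hX y))
    (fun y => orbitFunctional_isProb hm _ _)
    (fun y s f => by
      change (m _).re = (m _).re
      rw [← hm.left_inv s _ (hX y f)]
      congr 2
      ext t
      have : a s (a t y) = a (s * t) y := Subtype.ext (hmul s t y y.2)
      simp [lTrans, ← this])
    (fun y f hf => by
      have := hm.smul 0 _ (hX y f)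
      change (m _).re = 0
      simp only [hf, zero_smul, zero_mul, Complex.ofReal_zero] at this ⊢
      exact congrArg Complex.re this)
  exact ⟨x, x.2, fun s => congrArg Subtype.val (hx s)⟩

/-! ### The weak topology -/

lemma continuous_weakTop {E : Type*} [NormedAddCommGroup E] [NormedSpace ℝ E] (φ : E →L[ℝ] ℝ) :
    @Continuous E ℝ (weakTop ℝ E) _ φ :=
  continuous_iff_le_induced.2 (iInf_le _ φ)

lemma t2Space_weakTop (E : Type*) [NormedAddCommGroup E] [NormedSpace ℝ E] :
    @T2Space E (weakTop ℝ E) := by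
  refine @T2Space.mk E (weakTop ℝ E) fun x y hxy => ?_
  obtain ⟨φ, hφ⟩ := SeparatingDual.exists_separating_of_ne (R := ℝ) hxy
  exact @separated_by_continuous E ℝ (weakTop ℝ E) _ _ φ (continuous_weakTop φ) x y hφ

lemma isClosed_weakTop {E : Type*} [NormedAddCommGroup E] [NormedSpace ℝ E] (C : Set E)
    (hC : Convex ℝ C) (hC' : IsClosed C) : @IsClosed E (weakTop ℝ E) C := by
  refine @IsClosed.mk E (weakTop ℝ E) C ?_
  refine (@isOpen_iff_mem_nhds E (weakTop ℝ E) _).2 fun x hx => ?_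
  obtain ⟨φ, u, h1, h2⟩ := geometric_hahn_banach_closed_point hC hC' hx
  have ho : @IsOpen E (weakTop ℝ E) (φ ⁻¹' Set.Ioi u) :=
    (@continuous_def E ℝ (weakTop ℝ E) _ φ).1 (continuous_weakTop φ) _ isOpen_Ioi
  refine @Filter.mem_of_superset _ _ _ _ (@IsOpen.mem_nhds E (weakTop ℝ E) x _ ho h2) ?_
  intro y hy hyC
  exact lt_asymm hy (h1 y hyC)

/-- Theorem `Main`: Let `X` be a norm-closed translation-invariant
linear subspace of `ℓ^∞(S)` containing the constants. If `S` acts on a nonempty weakly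
compact convex subset `K` of a Banach space `E` so that the action is weakly separately
continuous and nonexpansive, `s ↦ f (s • y)` belongs to `X` for every `y ∈ K` and every
weakly continuous `f : K → ℂ`, and `X` has a left invariant mean, then there is a common
fixed point of `S` in `K`. -/
theorem exists_common_fixed_point_of_hasLIM (S : Type*) [Semigroup S] [TopologicalSpace S]
    [T2Space S] [SemitopoSemigroup S]
    (X : Set (S → ℂ)) (hX : IsTransInvSubspace X)
    (E : Type*) [NormedAddCommGroup E] [NormedSpace ℝ E] [CompleteSpace E]
    (K : Set E) (act : S → E → E)
    (hne : K.Nonempty) (hcomp : @IsCompact E (weakTop ℝ E) K) (hconv : Convex ℝ K)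
    (hact : IsActionOn act K) (hsc : WeaklySepContOn act K) (hnon : NonexpansiveOn act K)
    (hy : ∀ y ∈ K, ∀ f : E → ℂ, @ContinuousOn E ℂ (weakTop ℝ E) _ f K →
      (fun s : S => f (act s y)) ∈ X)
    (hLIM : HasLIM X) :
    ∃ x ∈ K, ∀ s : S, act s x = x := by
  refine @fixed_point_of_topology S E E _ (weakTop ℝ E) (t2Space_weakTop E) _ _ id
    Function.injective_id isClosed_weakTop X hLIM K act hne hcomp (by rwa [Set.image_id])
    hact.1 hact.2 hsc.1 hnon hy
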